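/- arXiv:1408.4090 — 5 statements merged into one kernel-verified Lean document; each statement's English description precedes it below -/
import Mathlib

section
/- Let n ≥ 1, let ℓ be a positive integer, and let λ = (λ₁,…,λₙ) ∈ ℝⁿ satisfy 0 ≤ λᵢ − λᵢ₊₁ ≤ 2ℓ for 1 ≤ i ≤ n−1 and 0 ≤ λₙ ≤ ℓ. Then there exist s₁,…,s_{n−1} ∈ {0,1} such that, setting μₖ = 2(sₖ + sₖ₊₁ + ⋯ + s_{n−1}) for 1 ≤ k ≤ n−1, μₙ = 0, and v = ℓμ − λ, one has |vᵢ − vⱼ| ≤ 2ℓ and |vᵢ + vⱼ| ≤ 2ℓ for all 1 ≤ i < j ≤ n, and |vᵢ| ≤ ℓ for all 1 ≤ i ≤ n. -/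
/-- Type `Cₙ` case of the key lemma: given `λ` with `0 ≤ λᵢ - λᵢ₊₁ ≤ 2ℓ` and
`0 ≤ λₙ ≤ ℓ`, there exist `s₁, …, s_{n-1} ∈ {0,1}` such that, with
`μₖ = 2(sₖ + ⋯ + s_{n-1})`, `μₙ = 0` and `v = ℓμ - λ`, one has
`|vᵢ - vⱼ| ≤ 2ℓ`, `|vᵢ + vⱼ| ≤ 2ℓ` for `i < j`, and `|vᵢ| ≤ ℓ`. -/
theorem exists_dominant_coweight_typeC
    (n : ℕ) (hn : 1 ≤ n) (ℓ : ℕ) (hℓ : 0 < ℓ) (lam : ℕ → ℝ)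
    (hstep : ∀ i : ℕ, 1 ≤ i → i ≤ n - 1 →
      0 ≤ lam i - lam (i + 1) ∧ lam i - lam (i + 1) ≤ 2 * ℓ)
    (hlast : 0 ≤ lam n ∧ lam n ≤ ℓ) :
    ∃ s : ℕ → ℕ, (∀ i, s i ≤ 1) ∧
      (∀ i j : ℕ, 1 ≤ i → i < j → j ≤ n →
        |((ℓ : ℝ) * (2 * ∑ k ∈ Finset.Icc i (n - 1), (s k : ℝ)) - lam i) -
          ((ℓ : ℝ) * (2 * ∑ k ∈ Finset.Icc j (n - 1), (s k : ℝ)) - lam j)| ≤ 2 * ℓ ∧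
        |((ℓ : ℝ) * (2 * ∑ k ∈ Finset.Icc i (n - 1), (s k : ℝ)) - lam i) +
          ((ℓ : ℝ) * (2 * ∑ k ∈ Finset.Icc j (n - 1), (s k : ℝ)) - lam j)| ≤ 2 * ℓ) ∧
      (∀ i : ℕ, 1 ≤ i → i ≤ n →
        |(ℓ : ℝ) * (2 * ∑ k ∈ Finset.Icc i (n - 1), (s k : ℝ)) - lam i| ≤ ℓ) := by
  have key : ∀ t : ℕ, t + 1 ≤ n → ∃ s : ℕ → ℕ, (∀ i, s i ≤ 1) ∧
      (∀ i : ℕ, n - t ≤ i → i ≤ n →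
        |(ℓ : ℝ) * (2 * ∑ k ∈ Finset.Icc i (n - 1), (s k : ℝ)) - lam i| ≤ ℓ) := by
    intro t
    induction t with
    | zero =>
      intro _
      refine ⟨fun _ => 0, fun _ => by simp, fun i h1 h2 => ?_⟩
      have : i = n := by omega
      subst this
      rw [abs_le]
      simp
      constructor <;> linarith [hlast.1, hlast.2]
    | succ t ih =>
      intro ht
      obtain ⟨s, hs, hb⟩ := ih (by omega)
      obtain ⟨a, ha⟩ : ∃ a, a = n - (t + 1) := ⟨_, rfl⟩
      have h1 := hb (a + 1) (by omega) (by omega)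
      obtain ⟨d1, d2⟩ := hstep a (by omega) (by omega)
      have hsum : ∀ c i, a < i → ∑ k ∈ Finset.Icc i (n - 1), ((Function.update s a c k : ℕ) : ℝ)
          = ∑ k ∈ Finset.Icc i (n - 1), (s k : ℝ) := by
        intro c i hi
        refine Finset.sum_congr rfl fun k hk => ?_
        have := (Finset.mem_Icc.1 hk).1
        rw [Function.update_of_ne (by omega)]
      have hsum' : ∀ c, ∑ k ∈ Finset.Icc a (n - 1), ((Function.update s a c k : ℕ) : ℝ)
          = c + ∑ k ∈ Finset.Icc (a + 1) (n - 1), (s k : ℝ) := by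
        intro c
        rw [← hsum c (a + 1) (by omega), ← Finset.add_sum_Ioc_eq_sum_Icc (by omega : a ≤ n - 1),
          Function.update_self]
        have hI : Finset.Ioc a (n - 1) = Finset.Icc (a + 1) (n - 1) := by
          ext x; simp only [Finset.mem_Ioc, Finset.mem_Icc]; omega
        rw [hI]
      have hc : ∃ c : ℕ, c ≤ 1 ∧
          |(ℓ : ℝ) * (2 * (c + ∑ k ∈ Finset.Icc (a + 1) (n - 1), (s k : ℝ))) - lam a| ≤ ℓ := by
        generalize ∑ k ∈ Finset.Icc (a + 1) (n - 1), (s k : ℝ) = S at h1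
        rw [abs_le] at h1
        by_cases h : -(ℓ : ℝ) ≤ (ℓ : ℝ) * (2 * S) - lam a
        · refine ⟨0, by omega, ?_⟩
          rw [abs_le]; push_cast
          constructor <;> linarith
        · refine ⟨1, le_rfl, ?_⟩
          rw [abs_le]; push_cast
          constructor <;> linarith
      obtain ⟨c, hc1, hc2⟩ := hc
      refine ⟨Function.update s a c, fun i => ?_, fun i hi1 hi2 => ?_⟩
      · by_cases h : i = a
        · subst h; simpa using hc1
        · rw [Function.update_of_ne h]; exact hs i
      · by_cases h : i = a
        · subst h; rw [hsum']; exact hc2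
        · rw [hsum c i (by omega)]; exact hb i (by omega) hi2
  obtain ⟨s, hs, hb⟩ := key (n - 1) (by omega)
  refine ⟨s, hs, fun i j hi hij hj => ?_, fun i hi hi' => hb i (by omega) hi'⟩
  have h1 := abs_le.1 (hb i (by omega) (by omega))
  have h2 := abs_le.1 (hb j (by omega) (by omega))
  constructor <;> rw [abs_le] <;> constructor <;> linarith [h1.1, h1.2, h2.1, h2.2]
end

section
/- Let n ≥ 2, let ℓ be a positive real number, and let λ = (λ₁,…,λₙ) ∈ ℝⁿ satisfy 0 ≤ λᵢ − λᵢ₊₁ ≤ ℓ for 1 ≤ i ≤ n−1. Then there exist integers m₁ ≥ m₂ ≥ ⋯ ≥ mₙ = 0 with mᵢ − mᵢ₊₁ ∈ {0,1} for all 1 ≤ i ≤ n−1, such that |ℓ(mᵢ − mⱼ) − (λᵢ − λⱼ)| ≤ ℓ for all 1 ≤ i < j ≤ n. -/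
/-- Type `A_{n-1}` case of the key lemma: given `λ` with `0 ≤ λᵢ - λᵢ₊₁ ≤ ℓ`,
there exist integers `m₁ ≥ ⋯ ≥ mₙ = 0` with steps in `{0,1}` such that
`|ℓ(mᵢ - mⱼ) - (λᵢ - λⱼ)| ≤ ℓ` for all `i < j`. -/
theorem exists_dominant_weight_typeA
    (n : ℕ) (hn : 2 ≤ n) (ℓ : ℝ) (hℓ : 0 < ℓ) (lam : ℕ → ℝ)
    (hstep : ∀ i : ℕ, 1 ≤ i → i ≤ n - 1 →
      0 ≤ lam i - lam (i + 1) ∧ lam i - lam (i + 1) ≤ ℓ) :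
    ∃ m : ℕ → ℤ, m n = 0 ∧
      (∀ i : ℕ, 1 ≤ i → i ≤ n - 1 → m (i + 1) ≤ m i ∧ m i - m (i + 1) ≤ 1) ∧
      (∀ i j : ℕ, 1 ≤ i → i < j → j ≤ n →
        |ℓ * ((m i : ℝ) - (m j : ℝ)) - (lam i - lam j)| ≤ ℓ) := by
  have key : ∀ i, lam i - lam n = ℓ * ((lam i - lam n) / ℓ) := fun i => by
    field_simp
  refine ⟨fun i => ⌊(lam i - lam n) / ℓ⌋, by simp, ?_, ?_⟩
  · intro i h1 h2
    obtain ⟨h3, h4⟩ := hstep i h1 h2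
    have a : (lam (i + 1) - lam n) / ℓ ≤ (lam i - lam n) / ℓ := by
      gcongr
      linarith
    have b : (lam i - lam n) / ℓ ≤ (lam (i + 1) - lam n) / ℓ + 1 := by
      rw [div_add_one hℓ.ne']
      gcongr
      linarith
    refine ⟨Int.floor_mono a, ?_⟩
    have c := Int.floor_mono b
    rw [Int.floor_add_one] at c
    linarith
  · intro i j _ _ _
    have e : lam i - lam j = ℓ * ((lam i - lam n) / ℓ - (lam j - lam n) / ℓ) := by
      rw [mul_sub, ← key, ← key]
      ring
    rw [e, ← mul_sub, abs_mul, abs_of_pos hℓ]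
    apply mul_le_of_le_one_right hℓ.le
    have h1 := Int.floor_le ((lam i - lam n) / ℓ)
    have h2 := Int.lt_floor_add_one ((lam i - lam n) / ℓ)
    have h3 := Int.floor_le ((lam j - lam n) / ℓ)
    have h4 := Int.lt_floor_add_one ((lam j - lam n) / ℓ)
    rw [abs_le]
    constructor <;> linarith
end

section
/- Let n ≥ 2, let ℓ be a positive real number, and let λ = (λ₁,…,λₙ) ∈ ℝⁿ satisfy 0 ≤ λᵢ − λᵢ₊₁ ≤ ℓ for 1 ≤ i ≤ n−1 and 0 ≤ λ_{n−1} + λₙ ≤ ℓ. Then there exists an integer vector μ = (μ₁,…,μₙ) ∈ ℤⁿ with μ₁ ≥ μ₂ ≥ ⋯ ≥ μ_{n−1} ≥ |μₙ| such that |ℓ(μᵢ − μⱼ) − (λᵢ − λⱼ)| ≤ ℓ and |ℓ(μᵢ + μⱼ) − (λᵢ + λⱼ)| ≤ ℓ for all 1 ≤ i < j ≤ n. -/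
/-- Type `Dₙ` case of the key lemma: given `λ` with `0 ≤ λᵢ - λᵢ₊₁ ≤ ℓ` for
`1 ≤ i ≤ n-1` and `0 ≤ λ_{n-1} + λₙ ≤ ℓ`, there exists a dominant integral
vector `μ₁ ≥ ⋯ ≥ μ_{n-1} ≥ |μₙ|` with `|ℓ(μᵢ ∓ μⱼ) - (λᵢ ∓ λⱼ)| ≤ ℓ` for `i < j`. -/
theorem exists_dominant_weight_typeD
    (n : ℕ) (hn : 2 ≤ n) (ℓ : ℝ) (hℓ : 0 < ℓ) (lam : ℕ → ℝ)
    (hstep : ∀ i : ℕ, 1 ≤ i → i ≤ n - 1 →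
      0 ≤ lam i - lam (i + 1) ∧ lam i - lam (i + 1) ≤ ℓ)
    (hlast : 0 ≤ lam (n - 1) + lam n ∧ lam (n - 1) + lam n ≤ ℓ) :
    ∃ μ : ℕ → ℤ,
      (∀ i : ℕ, 1 ≤ i → i ≤ n - 2 → μ (i + 1) ≤ μ i) ∧
      |μ n| ≤ μ (n - 1) ∧
      (∀ i j : ℕ, 1 ≤ i → i < j → j ≤ n →
        |ℓ * ((μ i : ℝ) - (μ j : ℝ)) - (lam i - lam j)| ≤ ℓ ∧
        |ℓ * ((μ i : ℝ) + (μ j : ℝ)) - (lam i + lam j)| ≤ ℓ) := by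
  have mono : ∀ x y : ℝ, x ≤ y → ⌊x / ℓ + 1 / 2⌋ ≤ ⌊y / ℓ + 1 / 2⌋ := by
    intro x y h
    apply Int.floor_le_floor
    gcongr
  have err : ∀ x : ℝ, ℓ * (⌊x / ℓ + 1 / 2⌋ : ℝ) - x ≤ ℓ / 2 ∧
      -(ℓ / 2) ≤ ℓ * (⌊x / ℓ + 1 / 2⌋ : ℝ) - x := by
    intro x
    have h1 := Int.floor_le (x / ℓ + 1 / 2)
    have h2 := Int.lt_floor_add_one (x / ℓ + 1 / 2)
    have h3 : ℓ * (x / ℓ) = x := by field_simp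
    have h4 := mul_le_mul_of_nonneg_left h1 hℓ.le
    have h5 := mul_le_mul_of_nonneg_left h2.le hℓ.le
    constructor <;> linarith
  refine ⟨fun i => ⌊lam i / ℓ + 1 / 2⌋, ?_, ?_, ?_⟩
  · intro i h1 h2
    apply mono
    linarith [(hstep i h1 (by omega)).1]
  · have h := (hstep (n - 1) (by omega) le_rfl).1
    rw [show n - 1 + 1 = n by omega] at h
    rw [abs_le]
    refine ⟨?_, mono _ _ (by linarith)⟩
    have h0 := mono (-lam n) (lam (n - 1)) (by linarith [hlast.1])
    have h1 := Int.lt_floor_add_one (lam n / ℓ + 1 / 2)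
    have h2 := Int.lt_floor_add_one (-lam n / ℓ + 1 / 2)
    have h3 : -lam n / ℓ = -(lam n / ℓ) := neg_div _ _
    have h4 : (-1 : ℝ) < (⌊lam n / ℓ + 1 / 2⌋ : ℝ) + (⌊-lam n / ℓ + 1 / 2⌋ : ℝ) := by
      linarith
    have h5 : (-1 : ℤ) < ⌊lam n / ℓ + 1 / 2⌋ + ⌊-lam n / ℓ + 1 / 2⌋ := by
      exact_mod_cast h4
    show -⌊lam (n - 1) / ℓ + 1 / 2⌋ ≤ ⌊lam n / ℓ + 1 / 2⌋
    linarith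
  · intro i j _ _ _
    obtain ⟨a, b⟩ := err (lam i)
    obtain ⟨c, d⟩ := err (lam j)
    constructor <;> rw [abs_le] <;> constructor <;> linarith
end

section
/- Let n ≥ 1, let ℓ be a positive real number, and let λ = (λ₁,…,λₙ) ∈ ℝⁿ satisfy 0 ≤ λᵢ − λᵢ₊₁ ≤ ℓ for 1 ≤ i ≤ n−1 and 0 ≤ λₙ ≤ ℓ. Then there exists an integer vector μ = (μ₁,…,μₙ) ∈ ℤⁿ with μ₁ ≥ μ₂ ≥ ⋯ ≥ μₙ ≥ 0 such that |ℓ(μᵢ − μⱼ) − (λᵢ − λⱼ)| ≤ ℓ and |ℓ(μᵢ + μⱼ) − (λᵢ + λⱼ)| ≤ ℓ for all 1 ≤ i < j ≤ n, and |ℓμᵢ − λᵢ| ≤ ℓ for all 1 ≤ i ≤ n. -/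
/-- Type `Bₙ` case of the key lemma: given `λ` with `0 ≤ λᵢ - λᵢ₊₁ ≤ ℓ` for
`1 ≤ i ≤ n-1` and `0 ≤ λₙ ≤ ℓ`, there exists a dominant integral vector
`μ₁ ≥ ⋯ ≥ μₙ ≥ 0` with `|ℓ(μᵢ ∓ μⱼ) - (λᵢ ∓ λⱼ)| ≤ ℓ` for `i < j`,
and `|ℓμᵢ - λᵢ| ≤ ℓ` for all `i`. -/
theorem exists_dominant_weight_typeB
    (n : ℕ) (hn : 1 ≤ n) (ℓ : ℝ) (hℓ : 0 < ℓ) (lam : ℕ → ℝ)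
    (hstep : ∀ i : ℕ, 1 ≤ i → i ≤ n - 1 →
      0 ≤ lam i - lam (i + 1) ∧ lam i - lam (i + 1) ≤ ℓ)
    (hlast : 0 ≤ lam n ∧ lam n ≤ ℓ) :
    ∃ μ : ℕ → ℤ,
      (∀ i : ℕ, 1 ≤ i → i ≤ n - 1 → μ (i + 1) ≤ μ i) ∧
      0 ≤ μ n ∧
      (∀ i j : ℕ, 1 ≤ i → i < j → j ≤ n →
        |ℓ * ((μ i : ℝ) - (μ j : ℝ)) - (lam i - lam j)| ≤ ℓ ∧
        |ℓ * ((μ i : ℝ) + (μ j : ℝ)) - (lam i + lam j)| ≤ ℓ) ∧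
      (∀ i : ℕ, 1 ≤ i → i ≤ n → |ℓ * (μ i : ℝ) - lam i| ≤ ℓ) := by
  have key : ∀ i : ℕ, |ℓ * ((⌊lam i / ℓ + 1 / 2⌋ : ℤ) : ℝ) - lam i| ≤ ℓ / 2 := by
    intro i
    have h1 := Int.floor_le (lam i / ℓ + 1 / 2)
    have h2 := Int.lt_floor_add_one (lam i / ℓ + 1 / 2)
    have h3 : ℓ * (lam i / ℓ) = lam i := by field_simp
    have h4 := mul_le_mul_of_nonneg_left h1 hℓ.le
    have h5 := mul_le_mul_of_nonneg_left h2.le hℓ.le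
    rw [abs_le]
    constructor <;> linarith
  refine ⟨fun i => ⌊lam i / ℓ + 1 / 2⌋, ?_, ?_, ?_, ?_⟩
  · intro i h1 h2
    have h := (hstep i h1 h2).1
    have h' : lam (i + 1) ≤ lam i := by linarith
    apply Int.floor_le_floor
    gcongr
  · have := div_nonneg hlast.1 hℓ.le
    apply Int.floor_nonneg.mpr
    linarith
  · intro i j _ _ _
    have hi := abs_le.mp (key i)
    have hj := abs_le.mp (key j)
    constructor <;> rw [abs_le] <;> constructor <;> linarith [hi.1, hi.2, hj.1, hj.2]
  · intro i _ _
    have := key i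
    dsimp only
    linarith
end

section
/- Let ℓ be a positive integer and let x, y be real numbers with 0 ≤ x ≤ ℓ and 0 ≤ y ≤ ℓ. Then there exist a, b ∈ {0,1} such that for every pair (c,d) in the set {(1,0), (0,1), (1,1), (1,2), (1,3), (2,3)} one has |ℓ(c·a + d·b) − (c·x + d·y)| ≤ ℓ. -/
/-- The `G₂` case of the key lemma: for `0 ≤ x, y ≤ ℓ` there exist `a, b ∈ {0,1}` with
`|ℓ(c·a + d·b) - (c·x + d·y)| ≤ ℓ` for each of the six pairs `(c,d)` corresponding to
the positive roots of `G₂`. -/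
theorem exists_dominant_coweight_G2
    (ℓ : ℕ) (hℓ : 0 < ℓ) (x y : ℝ)
    (hx : 0 ≤ x ∧ x ≤ ℓ) (hy : 0 ≤ y ∧ y ≤ ℓ) :
    ∃ a b : ℕ, a ≤ 1 ∧ b ≤ 1 ∧
      ∀ c d : ℕ, (c, d) ∈ ({(1, 0), (0, 1), (1, 1), (1, 2), (1, 3), (2, 3)} : Set (ℕ × ℕ)) →
        |(ℓ : ℝ) * ((c : ℝ) * a + (d : ℝ) * b) - ((c : ℝ) * x + (d : ℝ) * y)| ≤ ℓ := by
  obtain ⟨hx0, hx1⟩ := hx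
  obtain ⟨hy0, hy1⟩ := hy
  have key : ∃ a b : ℕ, a ≤ 1 ∧ b ≤ 1 ∧
      ((2 * x + 3 * y ≤ ℓ ∧ a = 0 ∧ b = 0) ∨
       ((ℓ : ℝ) ≤ 2 * x + 3 * y ∧ x + 3 * y ≤ 2 * ℓ ∧ a = 1 ∧ b = 0) ∨
       (2 * (ℓ : ℝ) ≤ x + 3 * y ∧ 2 * x + 3 * y ≤ 4 * ℓ ∧ a = 0 ∧ b = 1) ∨
       (4 * (ℓ : ℝ) ≤ 2 * x + 3 * y ∧ a = 1 ∧ b = 1)) := by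
    rcases le_total (2 * x + 3 * y) (ℓ : ℝ) with h1 | h1
    · exact ⟨0, 0, by simp, by simp, Or.inl ⟨h1, rfl, rfl⟩⟩
    rcases le_total (x + 3 * y) (2 * (ℓ : ℝ)) with h2 | h2
    · exact ⟨1, 0, by simp, by simp, Or.inr (Or.inl ⟨h1, h2, rfl, rfl⟩)⟩
    rcases le_total (2 * x + 3 * y) (4 * (ℓ : ℝ)) with h3 | h3
    · exact ⟨0, 1, by simp, by simp, Or.inr (Or.inr (Or.inl ⟨h2, h3, rfl, rfl⟩))⟩
    · exact ⟨1, 1, by simp, by simp, Or.inr (Or.inr (Or.inr ⟨h3, rfl, rfl⟩))⟩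
  obtain ⟨a, b, ha, hb, h⟩ := key
  refine ⟨a, b, ha, hb, ?_⟩
  intro c d hcd
  simp only [Set.mem_insert_iff, Set.mem_singleton_iff, Prod.mk.injEq] at hcd
  rw [abs_le]
  rcases h with ⟨h1, rfl, rfl⟩ | ⟨h1, h2, rfl, rfl⟩ | ⟨h1, h2, rfl, rfl⟩ | ⟨h1, rfl, rfl⟩ <;>
  rcases hcd with ⟨rfl, rfl⟩ | ⟨rfl, rfl⟩ | ⟨rfl, rfl⟩ | ⟨rfl, rfl⟩ | ⟨rfl, rfl⟩ | ⟨rfl, rfl⟩ <;>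
  push_cast <;> constructor <;> linarith
end
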